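/- Fix σ ≥ 0. Assume that for each a ∈ 𝒜, the centered reward R(Y_a) − E[R(Y_a)] is σ-sub-Gaussian, i.e. E[exp(λ (R(Y_a) − E[R(Y_a)]))] ≤ exp(λ² σ² / 2) for all λ ∈ ℝ. Assume further that 𝒜 is a finite subset of ℝ^d and the conditional means are linear: there is a map μ : 𝒜 → ℝ^d such that for every a ∈ 𝒜 and every a* ∈ 𝒜 with ℙ(A* = a*) > 0, E[R(Y_a) | A* = a*] = aᵀ μ(a*), and for every a ∈ 𝒜, E[R(Y_a)] = aᵀ μ̄ where μ̄ = Σ_{a*∈𝒜} ℙ(A* = a*) μ(a*). Then ( E[R(Y_{A*}) − R(Y_A)] )² ≤ 2 d σ² · I(A*; (A, Y_A)). -/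

import Mathlib

open MeasureTheory ProbabilityTheory Real

/-- Mutual information between two finitely-valued random variables `X` and `Z`
under the measure `μ`: the Kullback--Leibler divergence between the joint law
of `(X, Z)` and the product of the marginal laws. -/
noncomputable def mutualInfo {Ω : Type*} [MeasurableSpace Ω] (μ : Measure Ω)
    {𝒳 𝒵 : Type*} [Fintype 𝒳] [Fintype 𝒵] (X : Ω → 𝒳) (Z : Ω → 𝒵) : ℝ :=
  ∑ x : 𝒳, ∑ z : 𝒵,
    (μ {ω | X ω = x ∧ Z ω = z}).toReal *
      Real.log ((μ {ω | X ω = x ∧ Z ω = z}).toReal /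
        ((μ {ω | X ω = x}).toReal * (μ {ω | Z ω = z}).toReal))

/-! The regret of Thompson sampling is the trace of the matrix
`M s a = √(ℙ(A* = s) ℙ(A* = a)) (E[R(Y_a) | A* = s] - E[R(Y_a)])`. When the conditional means are
linear in `d` features, `M` factors through `ℝ^d`, so `(tr M)² ≤ rank M · ‖M‖_F² ≤ d ‖M‖_F²`.

Each entry compares the means of `R(Y_a)` under `ℙ(· | A* = s)` and `ℙ`. The Donsker–Varadhan
inequality applied to `t (R(Y_a) - E[R(Y_a)])` and optimized over `t` bounds the squared difference
by `2 σ²` times the divergence of the two laws of `Y_a`. Since `A` is independent of `(A*, Y)` and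
distributed as `A*`, the weighted sum of these divergences is
`∑ a, ℙ(A* = a) I(A*; Y_a) = I(A*; (A, Y_A))`. -/

section TraceRank

open Module (finrank)

variable {𝕜 E ι : Type*} [RCLike 𝕜] [NormedAddCommGroup E] [InnerProductSpace 𝕜 E]
  [Fintype ι]

theorem sum_norm_sq_starProjection [FiniteDimensional 𝕜 E] (b : OrthonormalBasis ι 𝕜 E)
    (W : Submodule 𝕜 E) :
    ∑ i, ‖W.starProjection (b i)‖ ^ 2 = finrank 𝕜 W := by
  have proj : LinearMap.IsProj W (W.starProjection : E →ₗ[𝕜] E) :=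
    ⟨W.starProjection_apply_mem, fun _ ↦ W.starProjection_eq_self_iff.2⟩
  have trace_proj := congrArg RCLike.re (LinearMap.trace_eq_sum_inner _ b ▸ proj.trace)
  rw [map_sum, RCLike.natCast_re] at trace_proj
  rw [← trace_proj]
  refine Finset.sum_congr rfl fun i _ ↦ ?_
  rw [inner_re_symm]
  exact (W.re_inner_starProjection_eq_normSq (b i)).symm

theorem norm_trace_sq_le_finrank_range_mul (b : OrthonormalBasis ι 𝕜 E) (f : E →ₗ[𝕜] E) :
    ‖LinearMap.trace 𝕜 E f‖ ^ 2 ≤ finrank 𝕜 (LinearMap.range f) * ∑ i, ‖f (b i)‖ ^ 2 := by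
  have : FiniteDimensional 𝕜 E := .of_basis b.toBasis
  let P := (LinearMap.range f).starProjection
  have inner_eq (i : ι) : inner 𝕜 (b i) (f (b i)) = inner 𝕜 (P (b i)) (f (b i)) := by
    rw [Submodule.inner_starProjection_left_eq_right,
      Submodule.starProjection_eq_self_iff.2 (LinearMap.mem_range_self f _)]
  have norm_trace_le : ‖LinearMap.trace 𝕜 E f‖ ≤ ∑ i, ‖P (b i)‖ * ‖f (b i)‖ := by
    rw [LinearMap.trace_eq_sum_inner f b]
    exact norm_sum_le_of_le _ fun i _ ↦ inner_eq i ▸ norm_inner_le_norm _ _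
  calc ‖LinearMap.trace 𝕜 E f‖ ^ 2
      ≤ (∑ i, ‖P (b i)‖ * ‖f (b i)‖) ^ 2 := by gcongr
    _ ≤ (∑ i, ‖P (b i)‖ ^ 2) * ∑ i, ‖f (b i)‖ ^ 2 := Finset.sum_mul_sq_le_sq_mul_sq _ _ _
    _ = finrank 𝕜 (LinearMap.range f) * ∑ i, ‖f (b i)‖ ^ 2 := by
      rw [sum_norm_sq_starProjection b]

theorem norm_matrix_trace_sq_le_rank_mul (M : Matrix ι ι 𝕜) :
    ‖M.trace‖ ^ 2 ≤ M.rank * ∑ i, ∑ j, ‖M i j‖ ^ 2 := by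
  classical
  let b := EuclideanSpace.basisFun ι 𝕜
  have key := norm_trace_sq_le_finrank_range_mul b (Matrix.toLin b.toBasis b.toBasis M)
  rw [Matrix.trace_toLin_eq, ← M.rank_eq_finrank_range_toLin] at key
  refine key.trans_eq (congrArg _ ?_)
  rw [Finset.sum_comm]
  refine Finset.sum_congr rfl fun j _ ↦ ?_
  rw [← b.coe_toBasis, Matrix.toLin_self, EuclideanSpace.norm_sq_eq]
  simp [b, Pi.single_apply]

end TraceRank

section KullbackLeibler

open InformationTheory
open scoped ENNReal NNReal

variable {Ω : Type*} [MeasurableSpace Ω] {μ ν : Measure Ω}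

/-- The Donsker–Varadhan inequality: the divergence of `ν` from `μ` tilted by `f` is nonnegative. -/
theorem integral_sub_cgf_le_klDiv [IsProbabilityMeasure μ] [IsProbabilityMeasure ν]
    {f : Ω → ℝ} (hfν : Integrable f ν) (hfμ : Integrable (fun ω ↦ exp (f ω)) μ)
    (hKL : klDiv ν μ ≠ ∞) :
    ∫ ω, f ω ∂ν - log (∫ ω, exp (f ω) ∂μ) ≤ (klDiv ν μ).toReal := by
  obtain ⟨hνμ, hllr⟩ := klDiv_ne_top_iff.1 hKL
  have : IsProbabilityMeasure (μ.tilted f) := isProbabilityMeasure_tilted hfμ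
  have gibbs : 0 ≤ ∫ ω, llr ν (μ.tilted f) ω ∂ν := by
    simpa using integral_llr_add_sub_measure_univ_nonneg
      (hνμ.trans (absolutelyContinuous_tilted hfμ))
      (integrable_llr_tilted_right hνμ hfν hllr hfμ)
  rw [integral_llr_tilted_right hνμ hfν hfμ hllr] at gibbs
  rw [toReal_klDiv_of_measure_eq hνμ (by simp)]
  linarith

theorem sq_integral_le_two_mul_klDiv [IsProbabilityMeasure μ] [IsProbabilityMeasure ν]
    {X : Ω → ℝ} {c : ℝ≥0} (hX : HasSubgaussianMGF X c μ) (hXν : Integrable X ν)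
    (hKL : klDiv ν μ ≠ ∞) :
    (∫ ω, X ω ∂ν) ^ 2 ≤ 2 * c * (klDiv ν μ).toReal := by
  have quadratic_nonneg (t : ℝ) :
      0 ≤ (c / 2 : ℝ) * (t * t) + (-∫ ω, X ω ∂ν) * t + (klDiv ν μ).toReal := by
    have hDV := integral_sub_cgf_le_klDiv (hXν.const_mul t) (hX.integrable_exp_mul t) hKL
    have hcgf : log (∫ ω, exp (t * X ω) ∂μ) ≤ c * t ^ 2 / 2 := hX.cgf_le t
    rw [integral_const_mul] at hDV
    linarith
  have := discrim_le_zero quadratic_nonneg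
  rw [discrim] at this
  linarith

theorem sq_integral_comp_sub_le_two_mul_klDiv [IsProbabilityMeasure μ] [IsProbabilityMeasure ν]
    {𝒴 : Type*} [MeasurableSpace 𝒴] {Y : Ω → 𝒴} {R : 𝒴 → ℝ} {c : ℝ≥0} (hY : Measurable Y)
    (hR : Measurable R) (hsub : HasSubgaussianMGF (fun ω ↦ R (Y ω) - ∫ ω', R (Y ω') ∂μ) c μ)
    (hRν : Integrable (fun ω ↦ R (Y ω)) ν) (hKL : klDiv (ν.map Y) (μ.map Y) ≠ ∞) :
    (∫ ω, R (Y ω) ∂ν - ∫ ω, R (Y ω) ∂μ) ^ 2 ≤ 2 * c * (klDiv (ν.map Y) (μ.map Y)).toReal := by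
  have := Measure.isProbabilityMeasure_map (μ := μ) hY.aemeasurable
  have := Measure.isProbabilityMeasure_map (μ := ν) hY.aemeasurable
  let X (y : 𝒴) : ℝ := R y - ∫ ω, R (Y ω) ∂μ
  have hX : Measurable X := hR.sub_const _
  have hsub_map : HasSubgaussianMGF X c (μ.map Y) := hsub.congr_identDistrib
    ⟨(hX.comp hY).aemeasurable, hX.aemeasurable, (Measure.map_map hX hY).symm⟩
  have hXν : Integrable X (ν.map Y) :=
    (integrable_map_measure hX.aestronglyMeasurable hY.aemeasurable).2
      (hRν.sub (integrable_const _))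
  have integral_X : ∫ y, X y ∂ν.map Y = ∫ ω, R (Y ω) ∂ν - ∫ ω, R (Y ω) ∂μ := by
    rw [integral_map hY.aemeasurable hX.aestronglyMeasurable,
      integral_sub hRν (integrable_const _)]
    simp
  exact integral_X ▸ sq_integral_le_two_mul_klDiv hsub_map hXν hKL

theorem toReal_klDiv_eq_sum {𝒴 : Type*} [Fintype 𝒴] [MeasurableSpace 𝒴]
    [MeasurableSingletonClass 𝒴] {μ ν : Measure 𝒴} [IsProbabilityMeasure μ]
    [IsProbabilityMeasure ν] (hνμ : ν ≪ μ) :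
    (klDiv ν μ).toReal = ∑ y, ν.real {y} * log (ν.real {y} / μ.real {y}) := by
  rw [toReal_klDiv_of_measure_eq hνμ (by simp), integral_fintype .of_finite]
  refine Finset.sum_congr rfl fun y _ ↦ ?_
  have density : ν.real {y} = (ν.rnDeriv μ y).toReal * μ.real {y} := by
    conv_lhs => rw [← Measure.withDensity_rnDeriv_eq ν μ hνμ]
    rw [measureReal_def, withDensity_apply _ (measurableSet_singleton y), lintegral_singleton,
      ENNReal.toReal_mul, measureReal_def]
  rcases eq_or_ne (ν.real {y}) 0 with hy | hy
  · simp [hy]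
  · rw [smul_eq_mul, llr_def, density, mul_div_cancel_right₀]
    exact right_ne_zero_of_mul (density ▸ hy)

end KullbackLeibler

section FiniteValued

variable {Ω 𝒳 F : Type*} [MeasurableSpace Ω] {μ : Measure Ω} [NormedAddCommGroup F]

theorem setIntegral_eq_smul_integral_cond [NormedSpace ℝ F] [IsFiniteMeasure μ] (f : Ω → F)
    (E : Set Ω) :
    ∫ ω in E, f ω ∂μ = μ.real E • ∫ ω, f ω ∂μ[|E] := by
  by_cases hE : μ E = 0
  · rw [measureReal_def, hE, Measure.restrict_eq_zero.2 hE]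
    simp
  · rw [ProbabilityTheory.cond, integral_smul_measure, ENNReal.toReal_inv, ← measureReal_def,
      smul_inv_smul₀ ((measureReal_ne_zero_iff (measure_ne_top _ _)).2 hE)]

theorem measureReal_inter_eq_mul_cond [IsFiniteMeasure μ] {E : Set Ω} (hE : MeasurableSet E)
    (G : Set Ω) : μ.real (E ∩ G) = μ.real E * (μ[|E]).real G := by
  rw [measureReal_def, ← cond_mul_eq_inter hE, ENNReal.toReal_mul, mul_comm]
  rfl

variable [MeasurableSpace 𝒳] [MeasurableSingletonClass 𝒳] {X : 𝒳 → Ω → F} {T : Ω → 𝒳}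

theorem integrable_comp_index [Finite 𝒳] (hX : ∀ x, Integrable (X x) μ) (hT : Measurable T) :
    Integrable (fun ω ↦ X (T ω) ω) μ := by
  classical
  have := Fintype.ofFinite 𝒳
  have sum_indicator : (fun ω ↦ X (T ω) ω) = fun ω ↦ ∑ x, (T ⁻¹' {x}).indicator (X x) ω := by
    ext ω
    simp [Set.indicator_apply]
  rw [sum_indicator]
  exact integrable_finsetSum _ fun x _ ↦ (hX x).indicator (hT (measurableSet_singleton x))

theorem integral_comp_index [NormedSpace ℝ F] [Fintype 𝒳] (hX : ∀ x, Integrable (X x) μ)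
    (hT : Measurable T) :
    ∫ ω, X (T ω) ω ∂μ = ∑ x, ∫ ω in T ⁻¹' {x}, X x ω ∂μ := by
  have hfiber (x : 𝒳) : MeasurableSet (T ⁻¹' {x}) := hT (measurableSet_singleton x)
  have hunion : ⋃ x, T ⁻¹' {x} = Set.univ := by ext; simp
  rw [← setIntegral_univ, ← hunion, integral_iUnion_fintype hfiber
    (pairwise_disjoint_fiber T) fun x ↦ (integrable_comp_index hX hT).integrableOn]
  refine Finset.sum_congr rfl fun x _ ↦ setIntegral_congr_fun (hfiber x) fun ω hω ↦ ?_
  rw [Set.mem_preimage, Set.mem_singleton_iff] at hω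
  simp only [hω]

end FiniteValued

section MutualInformation

open InformationTheory

variable {Ω 𝒳 𝒵 𝒜 : Type*} [MeasurableSpace Ω] {μ : Measure Ω}
  [Fintype 𝒳] [MeasurableSpace 𝒳] [MeasurableSingletonClass 𝒳]
  [Fintype 𝒵] [MeasurableSpace 𝒵] [MeasurableSingletonClass 𝒵]

theorem mutualInfo_eq_sum_klDiv [IsProbabilityMeasure μ] {X : Ω → 𝒳} {Z : Ω → 𝒵}
    (hX : Measurable X) (hZ : Measurable Z) :
    mutualInfo μ X Z =
      ∑ x, μ.real (X ⁻¹' {x}) * (klDiv ((μ[|X ← x]).map Z) (μ.map Z)).toReal := by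
  refine Finset.sum_congr rfl fun x _ ↦ ?_
  have joint (z : 𝒵) : (μ {ω | X ω = x ∧ Z ω = z}).toReal =
      μ.real (X ⁻¹' {x}) * (μ[|X ← x]).real (Z ⁻¹' {z}) :=
    measureReal_inter_eq_mul_cond (hX (measurableSet_singleton x)) _
  simp only [joint]
  by_cases hx : μ (X ⁻¹' {x}) = 0
  · simp [measureReal_def, hx]
  have : IsProbabilityMeasure (μ[|X ← x]) := cond_isProbabilityMeasure hx
  have := Measure.isProbabilityMeasure_map (μ := μ) hZ.aemeasurable
  have := Measure.isProbabilityMeasure_map (μ := μ[|X ← x]) hZ.aemeasurable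
  rw [toReal_klDiv_eq_sum (cond_absolutelyContinuous.map hZ), Finset.mul_sum]
  refine Finset.sum_congr rfl fun z _ ↦ ?_
  rw [map_measureReal_apply hZ (measurableSet_singleton z),
    map_measureReal_apply hZ (measurableSet_singleton z), mul_assoc]
  congr 3
  exact mul_div_mul_left _ _ ((measureReal_ne_zero_iff (measure_ne_top _ _)).2 hx)

theorem mutualInfo_nonneg [IsProbabilityMeasure μ] {X : Ω → 𝒳} {Z : Ω → 𝒵}
    (hX : Measurable X) (hZ : Measurable Z) : 0 ≤ mutualInfo μ X Z := by
  rw [mutualInfo_eq_sum_klDiv hX hZ]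
  positivity

theorem measureReal_index_eq_and_mem {𝒲 : Type*} [MeasurableSpace 𝒜] [MeasurableSingletonClass 𝒜]
    [MeasurableSpace 𝒲] {A : Ω → 𝒜} {W : 𝒜 → Ω → 𝒲} {a : 𝒜} (hindep : A ⟂ᵢ[μ] W a) {C : Set 𝒲}
    (hC : MeasurableSet C) :
    μ.real {ω | A ω = a ∧ W (A ω) ω ∈ C} = μ.real (A ⁻¹' {a}) * μ.real (W a ⁻¹' C) := by
  have inter_eq : {ω | A ω = a ∧ W (A ω) ω ∈ C} = A ⁻¹' {a} ∩ W a ⁻¹' C := by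
    ext ω
    exact and_congr_right fun h ↦ by rw [h, Set.mem_preimage]
  rw [inter_eq, measureReal_def,
    hindep.measure_inter_preimage_eq_mul _ _ (measurableSet_singleton a) hC, ENNReal.toReal_mul]
  rfl

theorem mutualInfo_index_pair_eq_sum [Fintype 𝒜] [MeasurableSpace 𝒜] [MeasurableSingletonClass 𝒜]
    {S : Ω → 𝒳} {A : Ω → 𝒜} {Y : 𝒜 → Ω → 𝒵} (hindep : ∀ a, A ⟂ᵢ[μ] fun ω ↦ (S ω, Y a ω)) :
    mutualInfo μ S (fun ω ↦ (A ω, Y (A ω) ω)) =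
      ∑ a, μ.real (A ⁻¹' {a}) * mutualInfo μ S (Y a) := by
  have joint (s : 𝒳) (a : 𝒜) (z : 𝒵) :
      (μ {ω | S ω = s ∧ (A ω, Y (A ω) ω) = (a, z)}).toReal =
        μ.real (A ⁻¹' {a}) * (μ {ω | S ω = s ∧ Y a ω = z}).toReal := by
    have := measureReal_index_eq_and_mem (W := fun a ω ↦ (S ω, Y a ω)) (hindep a)
      (measurableSet_singleton (s, z))
    simpa [Set.preimage, Measure.real, and_left_comm] using this
  have marginal (a : 𝒜) (z : 𝒵) :
      (μ {ω | (A ω, Y (A ω) ω) = (a, z)}).toReal =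
        μ.real (A ⁻¹' {a}) * (μ {ω | Y a ω = z}).toReal := by
    have hindepY : A ⟂ᵢ[μ] Y a := (hindep a).comp measurable_id measurable_snd
    have := measureReal_index_eq_and_mem hindepY (measurableSet_singleton z)
    simpa [Set.preimage, Measure.real] using this
  simp only [mutualInfo, Fintype.sum_prod_type, joint, marginal, Finset.mul_sum]
  rw [Finset.sum_comm]
  refine Finset.sum_congr rfl fun a _ ↦ Finset.sum_congr rfl fun s _ ↦
    Finset.sum_congr rfl fun z _ ↦ ?_
  rcases eq_or_ne (μ.real (A ⁻¹' {a})) 0 with ha | ha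
  · simp [ha]
  · rw [mul_left_comm (μ {ω | S ω = s}).toReal, mul_div_mul_left _ _ ha, mul_assoc]

end MutualInformation

section ThompsonSampling

open InformationTheory
open scoped NNReal

variable {Ω 𝒜 : Type*} [MeasurableSpace Ω] {μ : Measure Ω}

/-- The matrix `M` of Russo and Van Roy, for rewards `X a` and an optimal action `S`:
`M s a = √(ℙ(S = s) ℙ(S = a)) (E[X a | S = s] - E[X a])`. The expected regret of Thompson sampling
is its trace, while its squared Frobenius norm is controlled by the information gained about `S`.
If `ℙ(S = s) = 0`, the conditional expectation has the junk value `0` and row `s` vanishes. -/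
noncomputable def gainMatrix (μ : Measure Ω) (X : 𝒜 → Ω → ℝ) (S : Ω → 𝒜) : Matrix 𝒜 𝒜 ℝ :=
  .of fun s a ↦ √(μ.real (S ⁻¹' {s}) * μ.real (S ⁻¹' {a})) *
    (∫ ω, X a ω ∂μ[|S ← s] - ∫ ω, X a ω ∂μ)

variable [Fintype 𝒜] [MeasurableSpace 𝒜] [MeasurableSingletonClass 𝒜] {S A : Ω → 𝒜}

theorem integral_sub_eq_trace_gainMatrix [IsFiniteMeasure μ] {X : 𝒜 → Ω → ℝ}
    (hX : ∀ a, Integrable (X a) μ) (hS : Measurable S) (hA : Measurable A)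
    (hmatch : ∀ a, μ (A ⁻¹' {a}) = μ (S ⁻¹' {a})) (hindep : ∀ a, A ⟂ᵢ[μ] X a) :
    ∫ ω, (X (S ω) ω - X (A ω) ω) ∂μ = (gainMatrix μ X S).trace := by
  have optimal (a : 𝒜) :
      ∫ ω in S ⁻¹' {a}, X a ω ∂μ = μ.real (S ⁻¹' {a}) * ∫ ω, X a ω ∂μ[|S ← a] :=
    setIntegral_eq_smul_integral_cond _ _
  have selected (a : 𝒜) :
      ∫ ω in A ⁻¹' {a}, X a ω ∂μ = μ.real (S ⁻¹' {a}) * ∫ ω, X a ω ∂μ := by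
    rw [measureReal_def, ← hmatch]
    exact Indep.setIntegral_eq_mul (f := id) hA.comap_le (hindep a) (hX a).aemeasurable
      ⟨{a}, measurableSet_singleton a, rfl⟩ aestronglyMeasurable_id
  rw [integral_sub (integrable_comp_index hX hS) (integrable_comp_index hX hA),
    integral_comp_index hX hS, integral_comp_index hX hA, ← Finset.sum_sub_distrib]
  refine Finset.sum_congr rfl fun a _ ↦ ?_
  rw [optimal, selected, Matrix.diag_apply, gainMatrix, Matrix.of_apply,
    sqrt_mul_self measureReal_nonneg, mul_sub]

theorem rank_gainMatrix_le_card [IsFiniteMeasure μ] {κ : Type*} [Fintype κ] {X : 𝒜 → Ω → ℝ}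
    (hX : ∀ a, Integrable (X a) μ) (hS : Measurable S) {φ ψ : 𝒜 → κ → ℝ}
    (hlin : ∀ a s, μ (S ⁻¹' {s}) ≠ 0 → ∫ ω, X a ω ∂μ[|S ← s] = φ a ⬝ᵥ ψ s) :
    (gainMatrix μ X S).rank ≤ Fintype.card κ := by
  let p (s : 𝒜) : ℝ := μ.real (S ⁻¹' {s})
  let ψmean : κ → ℝ := ∑ s, p s • ψ s
  have mean_eq (a : 𝒜) : ∫ ω, X a ω ∂μ = φ a ⬝ᵥ ψmean := by
    rw [integral_comp_index (fun _ ↦ hX a) hS, dotProduct_sum]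
    refine Finset.sum_congr rfl fun s _ ↦ ?_
    rw [setIntegral_eq_smul_integral_cond, dotProduct_smul]
    by_cases hs : μ (S ⁻¹' {s}) = 0
    · simp [p, measureReal_def, hs]
    · rw [hlin a s hs]
  let B : Matrix 𝒜 κ ℝ := .of fun s i ↦ √(p s) * (ψ s - ψmean) i
  let C : Matrix κ 𝒜 ℝ := .of fun i a ↦ √(p a) * φ a i
  have factorization : gainMatrix μ X S = B * C := by
    ext s a
    by_cases hs : μ (S ⁻¹' {s}) = 0
    · simp [gainMatrix, Matrix.mul_apply, B, p, measureReal_def, hs]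
    · rw [gainMatrix, Matrix.of_apply, hlin a s hs, mean_eq, ← dotProduct_sub,
        sqrt_mul measureReal_nonneg, Matrix.mul_apply, dotProduct, Finset.mul_sum]
      exact Finset.sum_congr rfl fun i _ ↦ by simp only [B, C, p, Matrix.of_apply]; ring
  rw [factorization]
  exact (Matrix.rank_mul_le_left B C).trans B.rank_le_card_width

variable {𝒴 : Type*} [Fintype 𝒴] [MeasurableSpace 𝒴] [MeasurableSingletonClass 𝒴]
  [IsProbabilityMeasure μ] {Y : 𝒜 → Ω → 𝒴} {R : 𝒴 → ℝ} {c : ℝ≥0}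

theorem sum_sq_gainMatrix_le_mutualInfo (hS : Measurable S) (hY : ∀ a, Measurable (Y a))
    (hsub : ∀ a, HasSubgaussianMGF (fun ω ↦ R (Y a ω) - ∫ ω', R (Y a ω') ∂μ) c μ) :
    ∑ s, ∑ a, gainMatrix μ (fun a ω ↦ R (Y a ω)) S s a ^ 2 ≤
      2 * c * ∑ a, μ.real (S ⁻¹' {a}) * mutualInfo μ S (Y a) := by
  have entry_le (s a : 𝒜) : gainMatrix μ (fun a ω ↦ R (Y a ω)) S s a ^ 2 ≤
      2 * c * (μ.real (S ⁻¹' {a}) * (μ.real (S ⁻¹' {s}) *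
        (klDiv ((μ[|S ← s]).map (Y a)) (μ.map (Y a))).toReal)) := by
    rw [gainMatrix, Matrix.of_apply, mul_pow, sq_sqrt (by positivity)]
    by_cases hs : μ (S ⁻¹' {s}) = 0
    · simp [measureReal_def, hs]
    have : IsProbabilityMeasure (μ[|S ← s]) := cond_isProbabilityMeasure hs
    have := Measure.isProbabilityMeasure_map (μ := μ[|S ← s]) (hY a).aemeasurable
    have gain_le := sq_integral_comp_sub_le_two_mul_klDiv (ν := μ[|S ← s]) (hY a)
      (measurable_of_finite R) (hsub a) (Integrable.of_finite.comp_measurable (hY a))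
      (klDiv_ne_top (cond_absolutelyContinuous.map (hY a)) .of_finite)
    refine (mul_le_mul_of_nonneg_left gain_le (by positivity)).trans_eq ?_
    ring
  simp only [mutualInfo_eq_sum_klDiv hS (hY _), Finset.mul_sum]
  rw [Finset.sum_comm]
  simpa only [Finset.mul_sum] using
    Finset.sum_le_sum fun a _ ↦ Finset.sum_le_sum fun s _ ↦ entry_le s a

theorem sq_regret_le_rank_mul_mutualInfo (hS : Measurable S) (hA : Measurable A)
    (hY : ∀ a, Measurable (Y a)) (hmatch : ∀ a, μ (A ⁻¹' {a}) = μ (S ⁻¹' {a}))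
    (hindep : ∀ a, A ⟂ᵢ[μ] fun ω ↦ (S ω, Y a ω))
    (hsub : ∀ a, HasSubgaussianMGF (fun ω ↦ R (Y a ω) - ∫ ω', R (Y a ω') ∂μ) c μ) :
    (∫ ω, (R (Y (S ω) ω) - R (Y (A ω) ω)) ∂μ) ^ 2 ≤
      (gainMatrix μ (fun a ω ↦ R (Y a ω)) S).rank *
        (2 * c * mutualInfo μ S (fun ω ↦ (A ω, Y (A ω) ω))) := by
  let X (a : 𝒜) (ω : Ω) : ℝ := R (Y a ω)
  have hX (a : 𝒜) : Integrable (X a) μ := Integrable.of_finite.comp_measurable (hY a)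
  have hindepX (a : 𝒜) : A ⟂ᵢ[μ] X a :=
    (hindep a).comp measurable_id ((measurable_of_finite R).comp measurable_snd)
  have information_eq : mutualInfo μ S (fun ω ↦ (A ω, Y (A ω) ω)) =
      ∑ a, μ.real (S ⁻¹' {a}) * mutualInfo μ S (Y a) := by
    simp only [mutualInfo_index_pair_eq_sum hindep, measureReal_def, hmatch]
  calc (∫ ω, (X (S ω) ω - X (A ω) ω) ∂μ) ^ 2
      = (gainMatrix μ X S).trace ^ 2 := by
        rw [integral_sub_eq_trace_gainMatrix hX hS hA hmatch hindepX]
    _ ≤ (gainMatrix μ X S).rank * ∑ s, ∑ a, gainMatrix μ X S s a ^ 2 := by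
        simpa using norm_matrix_trace_sq_le_rank_mul (gainMatrix μ X S)
    _ ≤ _ := by
        rw [information_eq]
        gcongr
        exact sum_sq_gainMatrix_le_mutualInfo hS hY hsub

theorem information_ratio_le_subGaussian_linear_general {d : ℕ} {φ ψ : 𝒜 → Fin d → ℝ} {σ : ℝ}
    (hsub : ∀ a t, ∫ ω, exp (t * (R (Y a ω) - ∫ ω', R (Y a ω') ∂μ)) ∂μ ≤ exp (t ^ 2 * σ ^ 2 / 2))
    (hY : ∀ a, Measurable (Y a)) (hS : Measurable S) (hA : Measurable A)
    (hmatch : ∀ a, μ (A ⁻¹' {a}) = μ (S ⁻¹' {a}))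
    (hindep : ∀ a, A ⟂ᵢ[μ] fun ω ↦ (S ω, Y a ω))
    (hlin : ∀ a s, μ (S ⁻¹' {s}) ≠ 0 → ∫ ω, R (Y a ω) ∂μ[|S ← s] = φ a ⬝ᵥ ψ s) :
    (∫ ω, (R (Y (S ω) ω) - R (Y (A ω) ω)) ∂μ) ^ 2 ≤
      2 * d * σ ^ 2 * mutualInfo μ S (fun ω ↦ (A ω, Y (A ω) ω)) := by
  let M := gainMatrix μ (fun a ω ↦ R (Y a ω)) S
  have subgaussian (a : 𝒜) : HasSubgaussianMGF (fun ω ↦ R (Y a ω) - ∫ ω', R (Y a ω') ∂μ)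
      ⟨σ ^ 2, sq_nonneg σ⟩ μ :=
    { integrable_exp_mul := fun t ↦ Integrable.of_finite.comp_measurable
        (g := fun y ↦ exp (t * (R y - ∫ ω', R (Y a ω') ∂μ))) (hY a)
      mgf_le := fun t ↦ mul_comm (t ^ 2) (σ ^ 2) ▸ hsub a t }
  have rank_le : M.rank ≤ d :=
    (rank_gainMatrix_le_card (fun a ↦ Integrable.of_finite.comp_measurable (hY a)) hS
      hlin).trans_eq (Fintype.card_fin d)
  have hYA : Measurable fun ω ↦ Y (A ω) ω :=
    (measurable_from_prod_countable_right (f := Function.uncurry Y) hY).comp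
      (hA.prodMk measurable_id)
  have information_nonneg := mutualInfo_nonneg (μ := μ) hS (hA.prodMk hYA)
  calc (∫ ω, (R (Y (S ω) ω) - R (Y (A ω) ω)) ∂μ) ^ 2
      ≤ M.rank * (2 * σ ^ 2 * mutualInfo μ S (fun ω ↦ (A ω, Y (A ω) ω))) :=
        sq_regret_le_rank_mul_mutualInfo hS hA hY hmatch hindep subgaussian
    _ ≤ d * (2 * σ ^ 2 * mutualInfo μ S (fun ω ↦ (A ω, Y (A ω) ω))) := by gcongr
    _ = 2 * d * σ ^ 2 * mutualInfo μ S (fun ω ↦ (A ω, Y (A ω) ω)) := by ring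

end ThompsonSampling

/-- **Corollary 1, linear bandit case** (sub-Gaussian analogue of
Proposition 5). If for each action the centered reward is `σ`-sub-Gaussian, the
action set `𝒜` is a finite subset of `ℝ^d` and the conditional mean rewards are
linear, then under Thompson sampling
`(E[R(Y_{A*}) − R(Y_A)])² ≤ 2 d σ² · I(A*; (A, Y_A))`. -/
theorem information_ratio_le_subGaussian_linear
    {Ω : Type*} [MeasurableSpace Ω] (μ : Measure Ω) [IsProbabilityMeasure μ]
    {d : ℕ} (𝒜 : Finset (Fin d → ℝ)) (h𝒜 : 𝒜.Nonempty)
    {𝒴 : Type*} [Fintype 𝒴] [Nonempty 𝒴]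
    [MeasurableSpace 𝒴] [MeasurableSingletonClass 𝒴]
    (Y : ↥𝒜 → Ω → 𝒴) (Astar A : Ω → ↥𝒜) (R : 𝒴 → ℝ)
    (σ : ℝ) (hσ : 0 ≤ σ)
    (hsub : ∀ (a : ↥𝒜) (l : ℝ),
      ∫ ω, Real.exp (l * (R (Y a ω) - ∫ ω', R (Y a ω') ∂μ)) ∂μ ≤
        Real.exp (l ^ 2 * σ ^ 2 / 2))
    (hYmeas : ∀ a, Measurable (Y a)) (hAstarMeas : Measurable Astar)
    (hAMeas : Measurable A)
    (hmatch : ∀ a : ↥𝒜, μ {ω | A ω = a} = μ {ω | Astar ω = a})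
    (hindep : IndepFun A (fun ω => (Astar ω, fun a => Y a ω)) μ)
    (μlin : ↥𝒜 → (Fin d → ℝ))
    (hlin : ∀ (a astar : ↥𝒜), μ {ω | Astar ω = astar} ≠ 0 →
      ∫ ω, R (Y a ω) ∂(μ[|{ω | Astar ω = astar}]) =
        ∑ i, (a : Fin d → ℝ) i * μlin astar i)
    (hlinMean : ∀ a : ↥𝒜,
      ∫ ω, R (Y a ω) ∂μ =
        ∑ i, (a : Fin d → ℝ) i *
          (∑ astar : ↥𝒜, (μ {ω | Astar ω = astar}).toReal * μlin astar i)) :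
    (∫ ω, (R (Y (Astar ω) ω) - R (Y (A ω) ω)) ∂μ) ^ 2 ≤
      2 * (d : ℝ) * σ ^ 2 *
        mutualInfo μ Astar (fun ω => (A ω, Y (A ω) ω)) :=
  information_ratio_le_subGaussian_linear_general (φ := Subtype.val) (ψ := μlin) hsub hYmeas
    hAstarMeas hAMeas hmatch
    (fun a ↦ hindep.comp measurable_id (measurable_id.prodMap (measurable_pi_apply a))) hlin
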